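/- arXiv:1909.03388 — 7 statements merged into one kernel-verified Lean document; each statement's English description precedes it below -/
import Mathlib

section
/- Let C ≥ 1 and let p : Fin C × Fin C × Fin C → ℝ be a nonnegative function with total sum 1, viewed as the joint distribution of a triple of random variables (W2, W1, W3). Suppose there is a row-stochastic C×C real matrix T such that p(w2, w1, w3) = (∑_{w} p(w2, w1, w)) · T(w1, w3) for all w2, w1, w3. Define Q23(w2, w3) = ∑_{w1} p(w2, w1, w3) and Q21(w2, w1) = ∑_{w3} p(w2, w1, w3). Then |det(Q23)| = |det(Q21)| · |det(T)| (relative invariance of DMI). -/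
theorem stmt_1 (C : ℕ) (hC : 1 ≤ C)
    (p : Fin C × Fin C × Fin C → ℝ)
    (hp_nonneg : ∀ w, 0 ≤ p w)
    (hp_sum : ∑ w, p w = 1)
    (T : Matrix (Fin C) (Fin C) ℝ)
    (hT_nonneg : ∀ i j, 0 ≤ T i j)
    (hT_row : ∀ i, ∑ j, T i j = 1)
    (hfact : ∀ w2 w1 w3, p (w2, w1, w3) = (∑ w, p (w2, w1, w)) * T w1 w3) :
    |(Matrix.of fun w2 w3 => ∑ w1, p (w2, w1, w3)).det| =
      |(Matrix.of fun w2 w1 => ∑ w3, p (w2, w1, w3)).det| * |T.det| := by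
  rw [← abs_mul, ← Matrix.det_mul]
  congr 2
  ext w2 w3
  rw [Matrix.mul_apply]
  simp only [Matrix.of_apply]
  exact Finset.sum_congr rfl fun w1 _ => hfact w2 w1 w3
end

section
/- Let C ≥ 1 and let p : Fin C × Fin C × Fin C → ℝ be a nonnegative function with total sum 1, viewed as the joint distribution of a triple of random variables (W2, W1, W3). Suppose there is a row-stochastic C×C real matrix T such that p(w2, w1, w3) = (∑_{w} p(w2, w1, w)) · T(w1, w3) for all w2, w1, w3. Define Q23(w2, w3) = ∑_{w1} p(w2, w1, w3) and Q21(w2, w1) = ∑_{w3} p(w2, w1, w3). Then |det(Q23)| ≤ |det(Q21)| (information-monotonicity of DMI). -/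
theorem abs_det_stoch_le_one {C : ℕ} (T : Matrix (Fin C) (Fin C) ℝ)
    (hT_nonneg : ∀ i j, 0 ≤ T i j)
    (hT_row : ∀ i, ∑ j, T i j = 1) : |T.det| ≤ 1 := by
  have hprod : ∀ f : Fin C → Fin C, 0 ≤ ∏ i, T i (f i) :=
    fun f => Finset.prod_nonneg fun i _ => hT_nonneg _ _
  have h1 : ∑ f : Fin C → Fin C, ∏ i, T i (f i) = 1 := by
    rw [← Fintype.prod_sum (fun i j => T i j)]
    simp [hT_row]
  rw [← Matrix.det_transpose, Matrix.det_apply']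
  calc |∑ σ : Equiv.Perm (Fin C), ((Equiv.Perm.sign σ : ℤ) : ℝ) * ∏ i, T.transpose (σ i) i|
      ≤ ∑ σ : Equiv.Perm (Fin C), |((Equiv.Perm.sign σ : ℤ) : ℝ) * ∏ i, T.transpose (σ i) i| :=
        Finset.abs_sum_le_sum_abs _ _
    _ = ∑ σ : Equiv.Perm (Fin C), ∏ i, T i (σ i) := by
        refine Finset.sum_congr rfl fun σ _ => ?_
        have hs : |((Equiv.Perm.sign σ : ℤ) : ℝ)| = 1 := by
          rcases Int.units_eq_one_or (Equiv.Perm.sign σ) with h | h <;> simp [h]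
        rw [abs_mul, hs, one_mul]
        exact abs_of_nonneg (hprod σ)
    _ = ∑ f ∈ Finset.univ.image (fun σ : Equiv.Perm (Fin C) => (σ : Fin C → Fin C)),
          ∏ i, T i (f i) := by
        rw [Finset.sum_image]
        intro a _ b _ h
        exact DFunLike.coe_injective h
    _ ≤ ∑ f : Fin C → Fin C, ∏ i, T i (f i) :=
        Finset.sum_le_sum_of_subset_of_nonneg (Finset.subset_univ _) fun f _ _ => hprod f
    _ = 1 := h1


theorem stmt_3 (C : ℕ) (hC : 1 ≤ C)
    (p : Fin C × Fin C × Fin C → ℝ)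
    (hp_nonneg : ∀ w, 0 ≤ p w)
    (hp_sum : ∑ w, p w = 1)
    (T : Matrix (Fin C) (Fin C) ℝ)
    (hT_nonneg : ∀ i j, 0 ≤ T i j)
    (hT_row : ∀ i, ∑ j, T i j = 1)
    (hfact : ∀ w2 w1 w3, p (w2, w1, w3) = (∑ w, p (w2, w1, w)) * T w1 w3) :
    |(Matrix.of fun w2 w3 => ∑ w1, p (w2, w1, w3)).det| ≤
      |(Matrix.of fun w2 w1 => ∑ w3, p (w2, w1, w3)).det| := by
  have h : (Matrix.of fun w2 w3 => ∑ w1, p (w2, w1, w3)) =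
      (Matrix.of fun w2 w1 => ∑ w3, p (w2, w1, w3)) * T := by
    ext w2 w3
    simp only [Matrix.mul_apply, Matrix.of_apply]
    exact Finset.sum_congr rfl fun w1 _ => hfact w2 w1 w3
  rw [h, Matrix.det_mul, abs_mul]
  exact mul_le_of_le_one_right (abs_nonneg _) (abs_det_stoch_le_one T hT_nonneg hT_row)
end

section
/- Let T be a C×C real matrix with nonnegative entries such that every row of T sums to 1. Then |det(T)| = 1 if and only if T is a permutation matrix, i.e., there exists a permutation σ of Fin C such that T(i, j) = 1 if j = σ(i) and T(i, j) = 0 otherwise. -/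
theorem stmt_4 (C : ℕ) (T : Matrix (Fin C) (Fin C) ℝ)
    (hT_nonneg : ∀ i j, 0 ≤ T i j)
    (hT_row : ∀ i, ∑ j, T i j = 1) :
    |T.det| = 1 ↔
      ∃ σ : Equiv.Perm (Fin C), ∀ i j, T i j = if j = σ i then 1 else 0 := by
  classical
  constructor
  · intro h
    have hdet : T.det = ∑ σ : Equiv.Perm (Fin C),
        ((Equiv.Perm.sign σ : ℤ) : ℝ) * ∏ i, T i (σ i) := by
      rw [← Matrix.det_transpose, Matrix.det_apply']
      rfl
    have hp : ∀ f : Fin C → Fin C, 0 ≤ ∏ i, T i (f i) :=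
      fun f => Finset.prod_nonneg fun i _ => hT_nonneg _ _
    have hle : 1 ≤ ∑ σ : Equiv.Perm (Fin C), ∏ i, T i (σ i) := by
      rw [← h, hdet]
      refine (Finset.abs_sum_le_sum_abs _ _).trans (Finset.sum_le_sum fun σ _ => ?_)
      rw [abs_mul, abs_of_nonneg (hp σ)]
      rcases Int.units_eq_one_or (Equiv.Perm.sign σ) with hs | hs <;> simp [hs]
    have hall : ∑ f : Fin C → Fin C, ∏ i, T i (f i) = 1 := by
      have := Finset.prod_univ_sum (fun _ : Fin C => (Finset.univ : Finset (Fin C)))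
        (fun i j => T i j)
      rw [Fintype.piFinset_univ] at this
      rw [← this]
      simp [hT_row]
    have hzero : ∀ f : Fin C → Fin C, ¬ Function.Injective f → ∏ i, T i (f i) = 0 := by
      intro f hf
      refine le_antisymm ?_ (hp f)
      have hinj : Function.Injective (fun σ : Equiv.Perm (Fin C) => (σ : Fin C → Fin C)) :=
        DFunLike.coe_injective
      have hmem : f ∉ Finset.univ.image
          (fun σ : Equiv.Perm (Fin C) => (σ : Fin C → Fin C)) := by
        intro hm
        obtain ⟨σ, -, rfl⟩ := Finset.mem_image.1 hm
        exact hf σ.injective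
      have h1 := Finset.sum_le_sum_of_subset_of_nonneg
        (Finset.subset_univ (insert f (Finset.univ.image
          (fun σ : Equiv.Perm (Fin C) => (σ : Fin C → Fin C)))))
        (f := fun f : Fin C → Fin C => ∏ i, T i (f i)) (fun g _ _ => hp g)
      rw [Finset.sum_insert hmem, Finset.sum_image (fun a _ b _ hab => hinj hab), hall] at h1
      linarith
    obtain ⟨σ, -, hσ⟩ : ∃ σ ∈ (Finset.univ : Finset (Equiv.Perm (Fin C))),
        ∏ i, T i (σ i) ≠ 0 := by
      apply Finset.exists_ne_zero_of_sum_ne_zero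
      linarith
    have hne : ∀ i, T i (σ i) ≠ 0 := fun i => Finset.prod_ne_zero_iff.1 hσ i (Finset.mem_univ i)
    have hoff : ∀ i j, j ≠ σ i → T i j = 0 := by
      intro i j hj
      by_contra hij
      have hn : ¬ Function.Injective (Function.update σ i j) := by
        intro hi
        have hk : σ.symm j ≠ i := by
          rintro rfl
          simp at hj
        apply hk
        apply hi
        simp [Function.update_of_ne hk]
      refine absurd (hzero _ hn) (Finset.prod_ne_zero_iff.2 fun k _ => ?_)
      by_cases hk : k = i
      · subst hk
        simpa using hij
      · rw [Function.update_of_ne hk]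
        exact hne k
    refine ⟨σ, fun i j => ?_⟩
    split_ifs with hj
    · subst hj
      rw [← hT_row i, Finset.sum_eq_single (σ i)]
      · exact fun b _ hb => hoff i b hb
      · simp
    · exact hoff i j hj
  · rintro ⟨σ, hσ⟩
    have : T = σ.permMatrix ℝ := by
      ext i j
      rw [hσ, Equiv.Perm.permMatrix, PEquiv.toMatrix_apply]
      simp [eq_comm]
    rw [this, Matrix.det_permutation]
    rcases Int.units_eq_one_or (Equiv.Perm.sign σ) with hs | hs <;> simp [hs]
end

section
/- Let Q be a C×C real matrix with nonnegative entries whose column sums d(y) = ∑_c Q(c, y) are all strictly positive. Then |det(Q)| = ∏_y d(y) if and only if there exists a permutation σ of Fin C such that Q(c, y) = d(y) if c = σ(y) and Q(c, y) = 0 otherwise. -/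
theorem stmt_9 (C : ℕ) (Q : Matrix (Fin C) (Fin C) ℝ)
    (hQ_nonneg : ∀ c y, 0 ≤ Q c y)
    (d : Fin C → ℝ)
    (hd : ∀ y, d y = ∑ c, Q c y)
    (hd_pos : ∀ y, 0 < d y) :
    |Q.det| = ∏ y, d y ↔
      ∃ σ : Equiv.Perm (Fin C), ∀ c y, Q c y = if c = σ y then d y else 0 := by
  have habs : ∀ σ : Equiv.Perm (Fin C), |((Equiv.Perm.sign σ : ℤ) : ℝ)| = 1 := by
    intro σ
    rcases Int.units_eq_one_or (Equiv.Perm.sign σ) with h | h <;> simp [h]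
  constructor
  · intro h
    have hpos : 0 < ∏ y, d y := Finset.prod_pos fun y _ => hd_pos y
    have hnn : ∀ f : Fin C → Fin C, 0 ≤ ∏ y, Q (f y) y :=
      fun f => Finset.prod_nonneg fun y _ => hQ_nonneg _ _
    have hexp : ∏ y, d y = ∑ f : Fin C → Fin C, ∏ y, Q (f y) y := by
      simp_rw [hd]
      rw [Finset.prod_univ_sum]
      simp
    have hdet : |Q.det| ≤ ∑ σ : Equiv.Perm (Fin C), ∏ y, Q (σ y) y := by
      rw [Matrix.det_apply']
      refine (Finset.abs_sum_le_sum_abs _ _).trans (Finset.sum_le_sum fun σ _ => ?_)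
      rw [abs_mul, habs, one_mul, abs_of_nonneg (hnn σ)]
    have hzero : ∀ f : Fin C → Fin C, ¬ Function.Injective f → ∏ y, Q (f y) y = 0 := by
      intro f hf
      let e : Equiv.Perm (Fin C) ↪ (Fin C → Fin C) := ⟨fun σ => σ, DFunLike.coe_injective⟩
      have hnot : f ∉ Finset.univ.map e := by
        intro hm
        obtain ⟨σ, -, rfl⟩ := Finset.mem_map.1 hm
        exact hf σ.injective
      have hle : ∑ g ∈ insert f (Finset.univ.map e), ∏ y, Q (g y) y
          ≤ ∑ g : Fin C → Fin C, ∏ y, Q (g y) y :=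
        Finset.sum_le_sum_of_subset_of_nonneg (Finset.subset_univ _) fun g _ _ => hnn g
      rw [Finset.sum_insert hnot, Finset.sum_map] at hle
      have hle2 : ∏ y, Q (f y) y + ∑ σ : Equiv.Perm (Fin C), ∏ y, Q (σ y) y
          ≤ ∑ g : Fin C → Fin C, ∏ y, Q (g y) y := hle
      linarith [hnn f]
    obtain ⟨σ, hσ⟩ : ∃ σ : Equiv.Perm (Fin C), ∏ y, Q (σ y) y ≠ 0 := by
      by_contra! hall
      simp only [hall, Finset.sum_const_zero] at hdet
      linarith
    have hne : ∀ y, Q (σ y) y ≠ 0 := fun y => Finset.prod_ne_zero_iff.1 hσ y (Finset.mem_univ y)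
    have hoff : ∀ c y, c ≠ σ y → Q c y = 0 := by
      intro c y hc
      have hy : σ.symm c ≠ y := by
        rintro rfl
        simp at hc
      have hni : ¬ Function.Injective (Function.update (σ : Fin C → Fin C) y c) := by
        intro hi
        apply hy
        apply hi
        rw [Function.update_of_ne hy]
        simp
      obtain ⟨z, -, hz⟩ := Finset.prod_eq_zero_iff.1 (hzero _ hni)
      by_cases hzy : z = y
      · subst hzy
        simpa using hz
      · rw [Function.update_of_ne hzy] at hz
        exact absurd hz (hne z)
    refine ⟨σ, fun c y => ?_⟩
    split_ifs with hc
    · rw [hd, Finset.sum_eq_single (σ y) (fun b _ hb => hoff b y hb) (by simp), hc]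
    · exact hoff c y hc
  · rintro ⟨σ, hσ⟩
    have hsub : Q.submatrix σ id = Matrix.diagonal d := by
      ext i j
      by_cases hij : i = j
      · subst hij
        simp [hσ]
      · simp [hσ, hij]
    have h1 := Matrix.det_permute σ Q
    rw [hsub, Matrix.det_diagonal] at h1
    have h2 := congrArg abs h1
    rw [abs_mul, habs, one_mul, abs_of_pos (Finset.prod_pos fun y _ => hd_pos y)] at h2
    exact h2.symm
end

section
/- Let d : Fin C → ℝ be strictly positive with ∑_y d(y) = 1, let D be the diagonal C×C matrix with diagonal entries d(y), let T be a row-stochastic C×C real matrix with det(T) ≠ 0, and let Q be any C×C real matrix with nonnegative entries whose y-th column sums to d(y). Then |det(Q * T)| ≤ |det(D * T)|, with equality if and only if there exists a permutation σ of Fin C such that Q(c, y) = d(y) if c = σ(y) and Q(c, y) = 0 otherwise. -/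
lemma det_abs_le_perm (C : ℕ) (Q : Matrix (Fin C) (Fin C) ℝ)
    (hQ : ∀ c y, 0 ≤ Q c y) :
    |Q.det| ≤ ∑ σ : Equiv.Perm (Fin C), ∏ y, Q (σ y) y := by
  rw [Matrix.det_apply']
  refine (Finset.abs_sum_le_sum_abs _ _).trans (Finset.sum_le_sum fun σ _ => ?_)
  have h : |((Equiv.Perm.sign σ : ℤ) : ℝ)| = 1 := by
    rcases Int.units_eq_one_or (Equiv.Perm.sign σ) with h | h <;> simp [h]
  rw [abs_mul, h, one_mul, abs_of_nonneg (Finset.prod_nonneg fun y _ => hQ _ _)]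

lemma perm_le_prod (C : ℕ) (Q : Matrix (Fin C) (Fin C) ℝ)
    (hQ : ∀ c y, 0 ≤ Q c y) :
    ∑ σ : Equiv.Perm (Fin C), ∏ y, Q (σ y) y ≤ ∏ y, ∑ c, Q c y := by
  classical
  rw [Fintype.prod_sum fun y c => Q c y]
  let e : Equiv.Perm (Fin C) ↪ (Fin C → Fin C) := ⟨fun σ => σ, DFunLike.coe_injective⟩
  have h := Finset.sum_map Finset.univ e (fun f => ∏ y, Q (f y) y)
  calc _ = _ := h.symm
    _ ≤ _ := Finset.sum_le_sum_of_subset_of_nonneg (Finset.subset_univ _)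
      fun f _ _ => Finset.prod_nonneg fun y _ => hQ _ _

lemma perm_add_le_prod (C : ℕ) (Q : Matrix (Fin C) (Fin C) ℝ)
    (hQ : ∀ c y, 0 ≤ Q c y) (g : Fin C → Fin C) (hg : ¬ Function.Injective g) :
    ∏ y, Q (g y) y + ∑ σ : Equiv.Perm (Fin C), ∏ y, Q (σ y) y ≤ ∏ y, ∑ c, Q c y := by
  classical
  rw [Fintype.prod_sum fun y c => Q c y]
  let e : Equiv.Perm (Fin C) ↪ (Fin C → Fin C) := ⟨fun σ => σ, DFunLike.coe_injective⟩
  have h := Finset.sum_map Finset.univ e (fun f => ∏ y, Q (f y) y)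
  have hn : g ∉ Finset.univ.map e := by
    intro hm
    obtain ⟨σ, -, rfl⟩ := Finset.mem_map.1 hm
    exact hg σ.injective
  have h2 := Finset.sum_insert (f := fun f : Fin C → Fin C => ∏ y, Q (f y) y) hn
  rw [h] at h2
  calc _ = _ := h2.symm
    _ ≤ _ := Finset.sum_le_sum_of_subset_of_nonneg (Finset.subset_univ _)
      fun f _ _ => Finset.prod_nonneg fun y _ => hQ _ _

theorem stmt_10 (C : ℕ) (d : Fin C → ℝ)
    (hd_pos : ∀ y, 0 < d y)
    (hd_sum : ∑ y, d y = 1)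
    (T : Matrix (Fin C) (Fin C) ℝ)
    (hT_nonneg : ∀ i j, 0 ≤ T i j)
    (hT_row : ∀ i, ∑ j, T i j = 1)
    (hT_det : T.det ≠ 0)
    (Q : Matrix (Fin C) (Fin C) ℝ)
    (hQ_nonneg : ∀ c y, 0 ≤ Q c y)
    (hQ_col : ∀ y, ∑ c, Q c y = d y) :
    |(Q * T).det| ≤ |(Matrix.diagonal d * T).det| ∧
      (|(Q * T).det| = |(Matrix.diagonal d * T).det| ↔
        ∃ σ : Equiv.Perm (Fin C), ∀ c y, Q c y = if c = σ y then d y else 0) := by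
  have h1 := det_abs_le_perm C Q hQ_nonneg
  have h2 := perm_le_prod C Q hQ_nonneg
  have h3 := perm_add_le_prod C Q hQ_nonneg
  simp only [hQ_col] at h2 h3
  have hdp : 0 < ∏ y, d y := Finset.prod_pos fun y _ => hd_pos y
  have hT : 0 < |T.det| := abs_pos.2 hT_det
  rw [Matrix.det_mul, Matrix.det_mul, Matrix.det_diagonal, abs_mul, abs_mul, abs_of_pos hdp]
  refine ⟨mul_le_mul_of_nonneg_right (h1.trans h2) hT.le, ?_⟩
  rw [mul_left_inj' hT.ne']
  constructor
  · intro heq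
    have hpos : 0 < ∑ σ : Equiv.Perm (Fin C), ∏ y, Q (σ y) y := by linarith
    obtain ⟨σ, -, hσ⟩ := Finset.exists_ne_zero_of_sum_ne_zero hpos.ne'
    have hσ' : ∀ y, Q (σ y) y ≠ 0 := fun y => Finset.prod_ne_zero_iff.1 hσ y (Finset.mem_univ _)
    have hz : ∀ c y, c ≠ σ y → Q c y = 0 := by
      intro c y hc
      by_contra hne
      have hg : ¬ Function.Injective (Function.update σ y c) := by
        intro hi
        have hne2 : σ.symm c ≠ y := fun h => hc (by rw [← h]; simp)
        exact hne2 (hi (by simp [Function.update_of_ne hne2]))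
      have hp : 0 < ∏ z, Q (Function.update σ y c z) z := by
        refine Finset.prod_pos fun z _ => lt_of_le_of_ne (hQ_nonneg _ _) (Ne.symm ?_)
        by_cases hzy : z = y
        · subst hzy; simpa using hne
        · simpa [Function.update_of_ne hzy] using hσ' z
      have := h3 _ hg
      linarith
    refine ⟨σ, fun c y => ?_⟩
    split_ifs with h
    · rw [← hQ_col y, h]
      exact (Finset.sum_eq_single (σ y) (fun b _ hb => hz b y hb) (by simp)).symm
    · exact hz c y h
  · rintro ⟨σ, hσ⟩
    have hQ : Q = (Matrix.diagonal d).submatrix σ.symm id := by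
      ext c y
      rw [hσ, Matrix.submatrix_apply, Matrix.diagonal_apply]
      by_cases h : c = σ y
      · simp [h]
      · have : σ.symm c ≠ y := fun h' => h (by rw [← h']; simp)
        simp [h, this]
    rw [hQ, Matrix.det_permute, Matrix.det_diagonal, abs_mul, abs_of_pos hdp]
    rcases Int.units_eq_one_or (Equiv.Perm.sign σ.symm) with h | h <;> rw [h] <;> simp
end

section
/- Let Q be a C×C real matrix and let R be a row-stochastic C×C real matrix. Then |det(Rᵀ * Q)| ≤ |det(Q)|. Consequently, for any C×C real matrix T, |det((Rᵀ * Q) * T)| ≤ |det(Q * T)|. -/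
theorem stmt_11_aux (C : ℕ) (R : Matrix (Fin C) (Fin C) ℝ)
    (hR_nonneg : ∀ i j, 0 ≤ R i j)
    (hR_row : ∀ i, ∑ j, R i j = 1) : |R.transpose.det| ≤ 1 := by
  have hprod : ∑ f : Fin C → Fin C, ∏ i, R i (f i) = 1 := by
    refine (Fintype.prod_sum (fun i j => R i j)).symm.trans ?_
    simp [hR_row]
  rw [Matrix.det_apply', ← hprod]
  calc |∑ σ : Equiv.Perm (Fin C), ((Equiv.Perm.sign σ : ℤ) : ℝ) * ∏ i, R.transpose (σ i) i|
      ≤ ∑ σ : Equiv.Perm (Fin C),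
          |((Equiv.Perm.sign σ : ℤ) : ℝ) * ∏ i, R.transpose (σ i) i| :=
        Finset.abs_sum_le_sum_abs _ _
    _ = ∑ σ : Equiv.Perm (Fin C), ∏ i, R i (σ i) := by
        refine Finset.sum_congr rfl fun σ _ => ?_
        have h0 : 0 ≤ ∏ i, R i (σ i) := Finset.prod_nonneg fun i _ => hR_nonneg _ _
        rcases Int.units_eq_one_or (Equiv.Perm.sign σ) with h | h <;>
          simp [h, abs_of_nonneg (hR_nonneg _ _), Finset.abs_prod]
    _ = ∑ f ∈ Finset.univ.map
          ⟨fun σ : Equiv.Perm (Fin C) => (σ : Fin C → Fin C), DFunLike.coe_injective⟩,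
          ∏ i, R i (f i) := by
        rw [Finset.sum_map]; rfl
    _ ≤ ∑ f : Fin C → Fin C, ∏ i, R i (f i) :=
        Finset.sum_le_sum_of_subset_of_nonneg (Finset.subset_univ _)
          fun f _ _ => Finset.prod_nonneg fun i _ => hR_nonneg _ _

theorem stmt_11 (C : ℕ) (Q R : Matrix (Fin C) (Fin C) ℝ)
    (hR_nonneg : ∀ i j, 0 ≤ R i j)
    (hR_row : ∀ i, ∑ j, R i j = 1) :
    |(R.transpose * Q).det| ≤ |Q.det| ∧
      ∀ T : Matrix (Fin C) (Fin C) ℝ,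
        |((R.transpose * Q) * T).det| ≤ |(Q * T).det| := by
  have key : ∀ P : Matrix (Fin C) (Fin C) ℝ, |(R.transpose * P).det| ≤ |P.det| := by
    intro P
    rw [Matrix.det_mul, abs_mul]
    exact mul_le_of_le_one_left (abs_nonneg _) (stmt_11_aux C R hR_nonneg hR_row)
  refine ⟨key Q, fun T => ?_⟩
  rw [Matrix.mul_assoc]
  exact key (Q * T)
end

section
/- Define the Shannon mutual information of a 2×2 real matrix P with positive entries summing to 1 as MI(P) = ∑_{i,j} P(i,j) · log(P(i,j) / (r(i) · s(j))), where r(i) = ∑_j P(i,j) and s(j) = ∑_i P(i,j). Let Q1 = [[0.1, 0.4], [0.2, 0.3]], Q2 = [[0.2, 0.6], [0.1, 0.1]], and T = [[0.8, 0.2], [0.4, 0.6]]. Then MI(Q1) > MI(Q2) while MI(Q1 * T) < MI(Q2 * T). -/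
noncomputable def MI (P : Matrix (Fin 2) (Fin 2) ℝ) : ℝ :=
  ∑ i, ∑ j, P i j * Real.log (P i j / ((∑ j', P i j') * (∑ i', P i' j)))

theorem four_logs (a b c d e f g h : ℝ) (k l m n k' l' m' n' : ℕ)
    (ha : 0 < a) (hb : 0 < b) (hc : 0 < c) (hd : 0 < d)
    (he : 0 < e) (hf : 0 < f) (hg : 0 < g) (hh : 0 < h)
    (H : a ^ k * b ^ l * c ^ m * d ^ n < e ^ k' * f ^ l' * g ^ m' * h ^ n') :
    k * Real.log a + l * Real.log b + m * Real.log c + n * Real.log d <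
      k' * Real.log e + l' * Real.log f + m' * Real.log g + n' * Real.log h := by
  have := Real.log_lt_log (by positivity) H
  rwa [Real.log_mul (by positivity) (by positivity), Real.log_mul (by positivity) (by positivity),
    Real.log_mul (by positivity) (by positivity), Real.log_mul (by positivity) (by positivity),
    Real.log_mul (by positivity) (by positivity), Real.log_mul (by positivity) (by positivity),
    Real.log_pow, Real.log_pow, Real.log_pow, Real.log_pow,
    Real.log_pow, Real.log_pow, Real.log_pow, Real.log_pow] at this

theorem MI_mk (a b c d : ℝ) : MI !![a, b; c, d] =
    a * Real.log (a / ((a + b) * (a + c))) + b * Real.log (b / ((a + b) * (b + d))) +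
    c * Real.log (c / ((c + d) * (a + c))) + d * Real.log (d / ((c + d) * (b + d))) := by
  simp [MI, Fin.sum_univ_two]
  ring

theorem stmt_14 :
    MI !![0.1, 0.4; 0.2, 0.3] > MI !![0.2, 0.6; 0.1, 0.1] ∧
      MI (!![0.1, 0.4; 0.2, 0.3] * !![0.8, 0.2; 0.4, 0.6]) <
        MI (!![0.2, 0.6; 0.1, 0.1] * !![0.8, 0.2; 0.4, 0.6]) := by
  have h1 := four_logs (5/6) (15/14) (5/3) (5/7) (2/3) (8/7) (4/3) (6/7) 2 6 1 1 1 4 2 3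
    (by norm_num) (by norm_num) (by norm_num) (by norm_num)
    (by norm_num) (by norm_num) (by norm_num) (by norm_num) (by norm_num)
  have h2 := four_logs (12/13) (13/12) (14/13) (11/12) (25/26) (25/24) (15/13) (5/6)
    12 13 14 11 20 20 6 4
    (by norm_num) (by norm_num) (by norm_num) (by norm_num)
    (by norm_num) (by norm_num) (by norm_num) (by norm_num) (by norm_num)
  push_cast at h1 h2
  constructor
  · rw [MI_mk, MI_mk]
    norm_num only at h1 ⊢
    linarith
  · rw [Matrix.mul_fin_two, Matrix.mul_fin_two, MI_mk, MI_mk]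
    norm_num only at h2 ⊢
    linarith
end
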